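/- arXiv:2409.04092 — 3 statements merged into one kernel-verified Lean document; each statement's English description precedes it below -/
import Mathlib

section
/- (Unified consensus error bound, second moment.) Under A1, A3, and A4 with general constants σ₀, σ₁, if sup_{t≥1} γ_t ≤ ρ/(2√(2(σ₁² + 2L²))), then for every t ≥ 0: E_t[‖Θ_o^{t+1}‖_F²] ≤ (1 − ρ/2)‖Θ_o^t‖_F² + (2nγ_{t+1}²/ρ)[(ς² + σ₀²) + 2σ₁²‖θ̄^t − θ*‖²]. -/
/-!
Since the mean minimizes the sum of squared distances, the consensus error only grows when the new
iterates are centered elsewhere, so the center may be taken measurable with respect to the past.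
With such a center the gradient noise has conditional mean zero, its cross terms vanish, and the
error splits into that of the noiseless step plus `γ²` times the conditional noise variance.

In the noiseless step, center at `θ̄ - γ ∇f(θ̄)`. The matrix `U * Uᵀ` fixes every family with zero
sum, so the bound on `Uᵀ * W * U` makes mixing contract the disagreement by `1 - ρ`. Convexity of
the square then leaves `(1 - ρ) ‖Θ_o‖²` plus `γ² / ρ` times the gradient discrepancy, which the
Lipschitz and heterogeneity bounds control by `2 (L² ‖Θ_o‖² + n ς²)`. The identity
`∑ i, ‖θ i - θ*‖² = ‖Θ_o‖² + n ‖θ̄ - θ*‖²` turns the noise variance into the same quantities, and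
the step-size condition absorbs every new multiple of `‖Θ_o‖²` into `(ρ / 2) ‖Θ_o‖²`.
-/

open MeasureTheory Filter Matrix
open scoped BigOperators RealInnerProductSpace

section MatrixModule

open scoped Matrix.Module

variable {ι R M : Type*} [Fintype ι] [DecidableEq ι] [Ring R] [AddCommGroup M] [Module R M]

theorem sum_matrix_smul {W : Matrix ι ι R} (hW : ∀ j, ∑ i, W i j = 1) (v : ι → M) :
    ∑ i, (W • v) i = ∑ i, v i := by
  simp only [Matrix.Module.smul_apply]
  rw [Finset.sum_comm]
  simp only [← Finset.sum_smul, hW, one_smul]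

theorem matrix_smul_const {W : Matrix ι ι R} (hW : ∀ i, ∑ j, W i j = 1) (c : M) :
    W • (fun _ : ι => c) = fun _ => c := by
  ext i
  simp only [Matrix.Module.smul_apply, ← Finset.sum_smul, hW, one_smul]

theorem one_sub_smul_ones_smul_of_sum_eq_zero (r : R) {v : ι → M} (hv : ∑ i, v i = 0) :
    ((1 : Matrix ι ι R) - r • Matrix.of fun _ _ => (1 : R)) • v = v := by
  rw [sub_smul, one_smul, smul_assoc]
  ext i
  simp [hv]

end MatrixModule

section MatrixNorm

open scoped Matrix.Module Matrix.Norms.L2Operator MatrixOrder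

variable {ι E : Type*} [Fintype ι] [DecidableEq ι] [SeminormedAddCommGroup E]
  [InnerProductSpace ℝ E]

theorem sum_inner_matrix_smul (A : Matrix ι ι ℝ) (u v : ι → E) :
    ∑ i, ⟪u i, (A • v) i⟫ = ∑ i, ⟪(Aᵀ • u) i, v i⟫ := by
  simp only [Matrix.Module.smul_apply, Matrix.transpose_apply, inner_sum, sum_inner,
    inner_smul_left, inner_smul_right, conj_trivial]
  exact Finset.sum_comm

theorem sum_norm_sq_matrix_smul (A : Matrix ι ι ℝ) (v : ι → E) :
    ∑ i, ‖(A • v) i‖ ^ 2 = ∑ i, ⟪((Aᵀ * A) • v) i, v i⟫ := by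
  simp only [← real_inner_self_eq_norm_sq, sum_inner_matrix_smul, mul_smul]

-- A factorization `A = Bᵀ * B` carries positivity from scalar coordinates to vector-valued ones.
theorem sum_inner_smul_nonneg_of_posSemidef {A : Matrix ι ι ℝ} (hA : A.PosSemidef)
    (v : ι → E) : 0 ≤ ∑ i, ⟪(A • v) i, v i⟫ := by
  obtain ⟨B, rfl⟩ := CStarAlgebra.nonneg_iff_eq_star_mul_self.mp hA.nonneg
  rw [star_eq_conjTranspose, conjTranspose_eq_transpose_of_trivial, ← sum_norm_sq_matrix_smul]
  positivity

theorem posSemidef_l2_opNorm_sq_smul_one_sub {κ : Type*} [Fintype κ] (A : Matrix κ ι ℝ) :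
    (‖A‖ ^ 2 • (1 : Matrix ι ι ℝ) - Aᵀ * A).PosSemidef := by
  refine .of_dotProduct_mulVec_nonneg ?_ fun x => ?_
  · simp [IsHermitian, conjTranspose_eq_transpose_of_trivial]
  · have h := pow_le_pow_left₀ (norm_nonneg _) (A.l2_opNorm_mulVec (WithLp.toLp 2 x)) 2
    rw [mul_pow, EuclideanSpace.real_norm_sq_eq, EuclideanSpace.real_norm_sq_eq] at h
    have hquad : star x ⬝ᵥ (‖A‖ ^ 2 • (1 : Matrix ι ι ℝ) - Aᵀ * A) *ᵥ x
        = ‖A‖ ^ 2 * ∑ i, x i ^ 2 - ∑ i, (A *ᵥ x) i ^ 2 := by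
      rw [star_trivial, sub_mulVec, smul_mulVec, one_mulVec, ← mulVec_mulVec, dotProduct_sub,
        dotProduct_smul, dotProduct_mulVec x Aᵀ, vecMul_transpose]
      simp only [dotProduct, sq, smul_eq_mul]
    exact hquad ▸ sub_nonneg.2 h

theorem sum_norm_sq_matrix_smul_le (A : Matrix ι ι ℝ) (v : ι → E) :
    ∑ i, ‖(A • v) i‖ ^ 2 ≤ ‖A‖ ^ 2 * ∑ i, ‖v i‖ ^ 2 := by
  have h := sum_inner_smul_nonneg_of_posSemidef (posSemidef_l2_opNorm_sq_smul_one_sub A) v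
  simpa only [sub_smul, smul_assoc, one_smul, Pi.sub_apply, Pi.smul_apply, inner_sub_left,
    real_inner_smul_left, real_inner_self_eq_norm_sq, Finset.sum_sub_distrib, ← Finset.mul_sum,
    ← sum_norm_sq_matrix_smul, sub_nonneg] using h

theorem sum_norm_sq_transpose_smul {U : Matrix ι ι ℝ} {v : ι → E} (hv : (U * Uᵀ) • v = v) :
    ∑ i, ‖(Uᵀ • v) i‖ ^ 2 = ∑ i, ‖v i‖ ^ 2 := by
  simp only [sum_norm_sq_matrix_smul, transpose_transpose, hv, real_inner_self_eq_norm_sq]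

theorem sum_norm_sq_smul_le_of_sum_eq_zero {W U : Matrix ι ι ℝ} {r κ : ℝ}
    (hW : ∀ j, ∑ i, W i j = 1)
    (hU : (1 : Matrix ι ι ℝ) - r • Matrix.of (fun _ _ => (1 : ℝ)) = U * Uᵀ)
    (hκ : ‖Uᵀ * W * U‖ ≤ κ) {v : ι → E} (hv : ∑ i, v i = 0) :
    ∑ i, ‖(W • v) i‖ ^ 2 ≤ κ ^ 2 * ∑ i, ‖v i‖ ^ 2 := by
  have hUv : (U * Uᵀ) • v = v := hU ▸ one_sub_smul_ones_smul_of_sum_eq_zero r hv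
  have hUWv : (U * Uᵀ) • W • v = W • v :=
    hU ▸ one_sub_smul_ones_smul_of_sum_eq_zero r ((sum_matrix_smul hW v).trans hv)
  calc ∑ i, ‖(W • v) i‖ ^ 2
      = ∑ i, ‖((Uᵀ * W * U) • Uᵀ • v) i‖ ^ 2 := by
        rw [← sum_norm_sq_transpose_smul hUWv, mul_smul (Uᵀ * W), ← mul_smul U, hUv, mul_smul]
    _ ≤ ‖Uᵀ * W * U‖ ^ 2 * ∑ i, ‖(Uᵀ • v) i‖ ^ 2 := sum_norm_sq_matrix_smul_le _ _
    _ ≤ κ ^ 2 * ∑ i, ‖v i‖ ^ 2 := by rw [sum_norm_sq_transpose_smul hUv]; gcongr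

/-- Assumption A3 on the weight matrix `W` of the communication network, with spectral gap `ρ`. The
entries of `W` may be negative, and the norm is the ℓ² operator norm; `U * Uᵀ` is the orthogonal
projection onto the vectors with zero sum. -/
structure IsMixing (W : Matrix ι ι ℝ) (ρ : ℝ) : Prop where
  row_sum : ∀ i, ∑ j, W i j = 1
  col_sum : ∀ j, ∑ i, W i j = 1
  exists_factor : ∃ U : Matrix ι ι ℝ,
    (1 : Matrix ι ι ℝ) - (Fintype.card ι : ℝ)⁻¹ • Matrix.of (fun _ _ => (1 : ℝ)) = U * Uᵀ ∧
      ‖Uᵀ * W * U‖ ≤ 1 - ρ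

theorem IsMixing.le_one {W : Matrix ι ι ℝ} {ρ : ℝ} (hW : IsMixing W ρ) : ρ ≤ 1 :=
  let ⟨_, _, hU⟩ := hW.exists_factor
  sub_nonneg.1 ((norm_nonneg _).trans hU)

end MatrixNorm

section ConsensusError

variable {ι : Type*} [Fintype ι]

/-- The average `θ̄` of the agents' states; it is `0` when there are no agents. -/
noncomputable def agentMean {M : Type*} [AddCommGroup M] [Module ℝ M] (x : ι → M) : M :=
  (Fintype.card ι : ℝ)⁻¹ • ∑ i, x i

theorem sum_sub_agentMean {M : Type*} [AddCommGroup M] [Module ℝ M] (x : ι → M) :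
    ∑ i, (x i - agentMean x) = 0 := by
  rcases isEmpty_or_nonempty ι with _ | _
  · exact Fintype.sum_empty _
  · rw [Finset.sum_sub_distrib, Finset.sum_const, Finset.card_univ, agentMean,
      ← Nat.cast_smul_eq_nsmul ℝ, smul_inv_smul₀ (by positivity), sub_self]

/-- The consensus error `‖Θ_o‖_F²`, the total squared deviation of the states from their mean. -/
noncomputable def consensusError {F : Type*} [SeminormedAddCommGroup F] [NormedSpace ℝ F]
    (x : ι → F) : ℝ :=
  ∑ i, ‖x i - agentMean x‖ ^ 2

theorem consensusError_nonneg {F : Type*} [SeminormedAddCommGroup F] [NormedSpace ℝ F]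
    (x : ι → F) : 0 ≤ consensusError x :=
  Finset.sum_nonneg fun _ _ => sq_nonneg _

variable {E : Type*} [SeminormedAddCommGroup E] [InnerProductSpace ℝ E]

theorem sum_norm_sub_sq_eq (x : ι → E) (c : E) :
    ∑ i, ‖x i - c‖ ^ 2 = consensusError x + Fintype.card ι * ‖agentMean x - c‖ ^ 2 := by
  have expand (i : ι) : ‖x i - c‖ ^ 2 = ‖x i - agentMean x‖ ^ 2
      + 2 * ⟪x i - agentMean x, agentMean x - c⟫ + ‖agentMean x - c‖ ^ 2 := by
    rw [← norm_add_sq_real, sub_add_sub_cancel]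
  simp only [expand, Finset.sum_add_distrib, ← Finset.mul_sum, ← sum_inner, sum_sub_agentMean,
    inner_zero_left, mul_zero, add_zero, consensusError, Finset.sum_const, Finset.card_univ,
    nsmul_eq_mul]

theorem consensusError_le (x : ι → E) (c : E) : consensusError x ≤ ∑ i, ‖x i - c‖ ^ 2 := by
  rw [sum_norm_sub_sq_eq]
  exact le_add_of_nonneg_right (by positivity)

theorem sum_add_mul_norm_sub_sq (b k : ℝ) (x : ι → E) (c : E) :
    ∑ i, (b + k * ‖x i - c‖ ^ 2) = Fintype.card ι * b
      + k * (consensusError x + Fintype.card ι * ‖agentMean x - c‖ ^ 2) := by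
  rw [Finset.sum_add_distrib, ← Finset.mul_sum, sum_norm_sub_sq_eq, Finset.sum_const,
    Finset.card_univ, nsmul_eq_mul]

end ConsensusError

section Drift

open scoped Matrix.Module

-- Convexity of the square at the weights `1 - ρ` and `ρ`, after writing `‖v‖ = ρ * (‖v‖ / ρ)`.
theorem norm_sub_sq_le_of_norm_le {F : Type*} [SeminormedAddCommGroup F] {u v : F} {ρ s : ℝ}
    (hρ0 : 0 < ρ) (hρ1 : ρ ≤ 1) (hu : ‖u‖ ≤ (1 - ρ) * s) :
    ‖u - v‖ ^ 2 ≤ (1 - ρ) * s ^ 2 + ‖v‖ ^ 2 / ρ := by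
  have hsub : ‖u - v‖ ≤ (1 - ρ) * s + ρ * (‖v‖ / ρ) := by
    rw [mul_div_cancel₀ _ hρ0.ne']
    exact (norm_sub_le u v).trans (by gcongr)
  calc ‖u - v‖ ^ 2 ≤ ((1 - ρ) * s + ρ * (‖v‖ / ρ)) ^ 2 := by gcongr
    _ ≤ (1 - ρ) * s ^ 2 + ρ * (‖v‖ / ρ) ^ 2 :=
      even_two.convexOn_pow.2 trivial trivial (sub_nonneg.2 hρ1) hρ0.le (sub_add_cancel 1 ρ)
    _ = (1 - ρ) * s ^ 2 + ‖v‖ ^ 2 / ρ := by field_simp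

theorem sum_norm_sub_sq_le_of_sum_norm_sq_le {ι F : Type*} [Fintype ι] [SeminormedAddCommGroup F]
    {u v : ι → F} {ρ c : ℝ} (hρ0 : 0 < ρ) (hρ1 : ρ ≤ 1) (hc : 0 ≤ c)
    (hu : ∑ i, ‖u i‖ ^ 2 ≤ (1 - ρ) ^ 2 * c) :
    ∑ i, ‖u i - v i‖ ^ 2 ≤ (1 - ρ) * c + (∑ i, ‖v i‖ ^ 2) / ρ := by
  have : 0 ≤ 1 - ρ := sub_nonneg.2 hρ1
  have hu' : ‖WithLp.toLp 2 u‖ ≤ (1 - ρ) * √c := by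
    refine le_of_sq_le_sq ?_ (by positivity)
    rwa [PiLp.norm_sq_eq_of_L2, mul_pow, Real.sq_sqrt hc]
  have h := norm_sub_sq_le_of_norm_le (v := WithLp.toLp 2 v) hρ0 hρ1 hu'
  rwa [Real.sq_sqrt hc, PiLp.norm_sq_eq_of_L2, PiLp.norm_sq_eq_of_L2] at h

theorem sum_norm_sub_agentMean_sq_le {ι F : Type*} [Fintype ι] [SeminormedAddCommGroup F]
    [NormedSpace ℝ F] {G : ι → F → F} {Gbar : F → F} {L : NNReal} {ς : ℝ}
    (hG : ∀ i, LipschitzWith L (G i)) (hς : ∀ i z, ‖Gbar z - G i z‖ ≤ ς) (x : ι → F) :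
    ∑ i, ‖G i (x i) - Gbar (agentMean x)‖ ^ 2
      ≤ 2 * (L ^ 2 * consensusError x + Fintype.card ι * ς ^ 2) := by
  have agent (i : ι) : ‖G i (x i) - Gbar (agentMean x)‖ ^ 2
      ≤ 2 * (L ^ 2 * ‖x i - agentMean x‖ ^ 2 + ς ^ 2) := by
    have h : ‖G i (x i) - Gbar (agentMean x)‖ ≤ L * ‖x i - agentMean x‖ + ς :=
      (norm_sub_le_norm_sub_add_norm_sub _ (G i (agentMean x)) _).trans
        (add_le_add ((hG i).norm_sub_le _ _) ((norm_sub_rev _ _).trans_le (hς i _)))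
    calc ‖G i (x i) - Gbar (agentMean x)‖ ^ 2
        ≤ (L * ‖x i - agentMean x‖ + ς) ^ 2 := by gcongr
      _ ≤ 2 * (L ^ 2 * ‖x i - agentMean x‖ ^ 2 + ς ^ 2) := by rw [← mul_pow]; exact add_sq_le
  calc ∑ i, ‖G i (x i) - Gbar (agentMean x)‖ ^ 2
      ≤ ∑ i, 2 * (L ^ 2 * ‖x i - agentMean x‖ ^ 2 + ς ^ 2) := Finset.sum_le_sum fun i _ => agent i
    _ = 2 * (L ^ 2 * consensusError x + Fintype.card ι * ς ^ 2) := by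
      simp only [← Finset.mul_sum, Finset.sum_add_distrib, consensusError, Finset.sum_const,
        Finset.card_univ, nsmul_eq_mul]

theorem consensusError_smul_sub_le {ι E : Type*} [Fintype ι] [DecidableEq ι]
    [SeminormedAddCommGroup E] [InnerProductSpace ℝ E] {W : Matrix ι ι ℝ} {G : ι → E → E}
    {Gbar : E → E} {L : NNReal} {ρ ς : ℝ} (hW : IsMixing W ρ)
    (hρ : 0 < ρ) (hG : ∀ i, LipschitzWith L (G i)) (hς : ∀ i z, ‖Gbar z - G i z‖ ≤ ς) (a : ℝ)
    (x : ι → E) :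
    consensusError (fun i => (W • x) i - a • G i (x i))
      ≤ (1 - ρ) * consensusError x
        + a ^ 2 * (2 * (L ^ 2 * consensusError x + Fintype.card ι * ς ^ 2)) / ρ := by
  obtain ⟨U, hU, hUWU⟩ := hW.exists_factor
  have hmix : ∑ i, ‖(W • fun j => x j - agentMean x) i‖ ^ 2 ≤ (1 - ρ) ^ 2 * consensusError x :=
    sum_norm_sq_smul_le_of_sum_eq_zero hW.col_sum hU hUWU (sum_sub_agentMean x)
  have hcenter (i : ι) :
      (W • x) i - a • G i (x i) - (agentMean x - a • Gbar (agentMean x))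
        = (W • fun j => x j - agentMean x) i - a • (G i (x i) - Gbar (agentMean x)) := by
    have : (W • fun j => x j - agentMean x) = W • x - fun _ => agentMean x := by
      rw [← matrix_smul_const hW.row_sum (agentMean x), ← smul_sub]; rfl
    rw [this, Pi.sub_apply, smul_sub]
    abel
  calc consensusError (fun i => (W • x) i - a • G i (x i))
      ≤ ∑ i, ‖(W • fun j => x j - agentMean x) i - a • (G i (x i) - Gbar (agentMean x))‖ ^ 2 := by
        simpa only [hcenter] using consensusError_le (fun i => (W • x) i - a • G i (x i))
          (agentMean x - a • Gbar (agentMean x))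
    _ ≤ (1 - ρ) * consensusError x
          + (∑ i, ‖a • (G i (x i) - Gbar (agentMean x))‖ ^ 2) / ρ :=
        sum_norm_sub_sq_le_of_sum_norm_sq_le hρ hW.le_one (consensusError_nonneg x) hmix
    _ ≤ _ := by
        simp only [norm_smul, mul_pow, Real.norm_eq_abs, sq_abs, ← Finset.mul_sum]
        gcongr
        exact sum_norm_sub_agentMean_sq_le hG hς x

end Drift

section Integrability

variable {Ω E ι : Type*} {mΩ : MeasurableSpace Ω} {μ : Measure Ω} [NormedAddCommGroup E]

theorem integrable_inner_of_memLp_two [InnerProductSpace ℝ E] {f g : Ω → E}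
    (hf : MemLp f 2 μ) (hg : MemLp g 2 μ) :
    Integrable (fun ω => ⟪f ω, g ω⟫) μ :=
  memLp_one_iff_integrable.1 ((innerSL ℝ).memLp_of_bilin 1 hf hg)

variable [NormedSpace ℝ E] [Fintype ι]

theorem stronglyMeasurable_agentMean {y : ι → Ω → E} (hy : ∀ i, StronglyMeasurable (y i)) :
    StronglyMeasurable fun ω => agentMean fun i => y i ω :=
  (Finset.stronglyMeasurable_fun_sum _ fun i _ => hy i).const_smul _

theorem memLp_agentMean {p : ENNReal} {y : ι → Ω → E} (hy : ∀ i, MemLp (y i) p μ) :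
    MemLp (fun ω => agentMean fun i => y i ω) p μ :=
  (memLp_finsetSum _ fun i _ => hy i).const_smul _

theorem integrable_consensusError {y : ι → Ω → E} (hy : ∀ i, MemLp (y i) 2 μ) :
    Integrable (fun ω => consensusError fun i => y i ω) μ :=
  integrable_finsetSum _ fun i _ =>
    ((hy i).sub (memLp_agentMean hy)).integrable_norm_pow two_ne_zero

end Integrability

section CondExp

variable {Ω E : Type*} {m mΩ : MeasurableSpace Ω} {μ : Measure Ω} [IsFiniteMeasure μ]
  [NormedAddCommGroup E] [InnerProductSpace ℝ E] [CompleteSpace E]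

theorem condExp_sub_ae_eq_zero (hm : m ≤ mΩ) {g h : Ω → E} (hg : Integrable g μ)
    (hh : StronglyMeasurable[m] h) (hgh : μ[g | m] =ᵐ[μ] h) :
    μ[fun ω => g ω - h ω | m] =ᵐ[μ] 0 := by
  have hhi : Integrable h μ := integrable_condExp.congr hgh
  filter_upwards [condExp_sub hg hhi m, hgh] with ω hsub hω
  refine hsub.trans ?_
  rw [Pi.sub_apply, condExp_of_stronglyMeasurable hm hh hhi, hω, sub_self, Pi.zero_apply]

theorem condExp_inner_ae_eq_zero {y ξ : Ω → E} (hy : StronglyMeasurable[m] y)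
    (hy2 : MemLp y 2 μ) (hξ2 : MemLp ξ 2 μ) (hξ0 : μ[ξ | m] =ᵐ[μ] 0) :
    μ[fun ω => ⟪y ω, ξ ω⟫ | m] =ᵐ[μ] 0 := by
  filter_upwards [condExp_bilin_of_stronglyMeasurable_left (innerSL ℝ) hy
    (integrable_inner_of_memLp_two hy2 hξ2) (hξ2.integrable one_le_two), hξ0] with ω hω h0
  refine hω.trans ?_
  rw [h0, Pi.zero_apply, map_zero, Pi.zero_apply]

theorem condExp_norm_sub_smul_sq (hm : m ≤ mΩ) {y ξ : Ω → E} (hy : StronglyMeasurable[m] y)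
    (hy2 : MemLp y 2 μ) (hξ2 : MemLp ξ 2 μ) (hξ0 : μ[ξ | m] =ᵐ[μ] 0) (a : ℝ) :
    μ[fun ω => ‖y ω - a • ξ ω‖ ^ 2 | m]
      =ᵐ[μ] fun ω => ‖y ω‖ ^ 2 + a ^ 2 * μ[fun ω => ‖ξ ω‖ ^ 2 | m] ω := by
  have hysq : Integrable (fun ω => ‖y ω‖ ^ 2) μ := hy2.integrable_norm_pow two_ne_zero
  have hξsq : Integrable (fun ω => ‖ξ ω‖ ^ 2) μ := hξ2.integrable_norm_pow two_ne_zero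
  have hyξ := integrable_inner_of_memLp_two hy2 hξ2
  have hfix : μ[fun ω => ‖y ω‖ ^ 2 | m] = fun ω => ‖y ω‖ ^ 2 :=
    condExp_of_stronglyMeasurable hm (hy.norm.pow 2) hysq
  have expand : (fun ω => ‖y ω - a • ξ ω‖ ^ 2) = (fun ω => ‖y ω‖ ^ 2)
      - (2 * a) • (fun ω => ⟪y ω, ξ ω⟫) + a ^ 2 • fun ω => ‖ξ ω‖ ^ 2 := by
    ext ω
    simp only [norm_sub_sq_real, inner_smul_right, norm_smul, mul_pow, Real.norm_eq_abs, sq_abs,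
      Pi.add_apply, Pi.sub_apply, Pi.smul_apply, smul_eq_mul, mul_assoc]
  rw [expand]
  filter_upwards [condExp_add (hysq.sub (hyξ.smul (2 * a))) (hξsq.smul (a ^ 2)) m,
    condExp_sub hysq (hyξ.smul (2 * a)) m, condExp_smul (2 * a) (fun ω => ⟪y ω, ξ ω⟫) m,
    condExp_smul (a ^ 2) (fun ω => ‖ξ ω‖ ^ 2) m, condExp_inner_ae_eq_zero hy hy2 hξ2 hξ0]
    with ω hadd hsub hinner hnoise hzero
  rw [hadd, Pi.add_apply, hsub, Pi.sub_apply, hinner, hnoise, Pi.smul_apply, hzero, Pi.zero_apply,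
    smul_zero, sub_zero, Pi.smul_apply, smul_eq_mul, hfix]

variable {ι : Type*} [Fintype ι]

theorem condExp_consensusError_sub_smul_le (hm : m ≤ mΩ) {y ξ : ι → Ω → E}
    (hy : ∀ i, StronglyMeasurable[m] (y i)) (hy2 : ∀ i, MemLp (y i) 2 μ)
    (hξ2 : ∀ i, MemLp (ξ i) 2 μ) (hξ0 : ∀ i, μ[ξ i | m] =ᵐ[μ] 0) (a : ℝ) :
    μ[fun ω => consensusError fun i => y i ω - a • ξ i ω | m] ≤ᵐ[μ] fun ω =>
      consensusError (fun i => y i ω) + a ^ 2 * ∑ i, μ[fun ω => ‖ξ i ω‖ ^ 2 | m] ω := by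
  -- Centering at the mean of the `y i` rather than the true mean keeps the center `m`-measurable.
  let z (i : ι) (ω : Ω) : E := y i ω - agentMean fun j => y j ω
  have hz (i : ι) : StronglyMeasurable[m] (z i) := (hy i).sub (stronglyMeasurable_agentMean hy)
  have hz2 (i : ι) : MemLp (z i) 2 μ := (hy2 i).sub (memLp_agentMean hy2)
  have hint (i : ι) : Integrable (fun ω => ‖z i ω - a • ξ i ω‖ ^ 2) μ :=
    ((hz2 i).sub ((hξ2 i).const_smul a)).integrable_norm_pow two_ne_zero
  have hle (ω : Ω) : consensusError (fun i => y i ω - a • ξ i ω)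
      ≤ (∑ i, fun ω => ‖z i ω - a • ξ i ω‖ ^ 2) ω := by
    simpa only [Finset.sum_apply, z, sub_right_comm] using
      consensusError_le (fun i => y i ω - a • ξ i ω) (agentMean fun j => y j ω)
  filter_upwards [condExp_mono (m := m)
      (integrable_consensusError fun i => (hy2 i).sub ((hξ2 i).const_smul a))
      (integrable_finsetSum' _ fun i _ => hint i) (.of_forall hle),
    condExp_finsetSum (s := Finset.univ) (fun i _ => hint i) m,
    ae_all_iff.2 fun i => condExp_norm_sub_smul_sq hm (hz i) (hz2 i) (hξ2 i) (hξ0 i) a]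
    with ω hmono hsum hnoise
  refine (hmono.trans_eq hsum).trans_eq ?_
  simp only [Finset.sum_apply, hnoise, Finset.sum_add_distrib, Finset.mul_sum, consensusError, z]

end CondExp

theorem drift_add_noise_le {a c D L n ρ ς σ₀ σ₁ : ℝ} (hρ0 : 0 < ρ) (hρ1 : ρ ≤ 1) (hc : 0 ≤ c)
    (hD : 0 ≤ D) (hn : 0 ≤ n) (ha : 2 * (σ₁ ^ 2 + 2 * L ^ 2) * a ^ 2 ≤ ρ ^ 2) :
    (1 - ρ) * c + a ^ 2 * (2 * (L ^ 2 * c + n * ς ^ 2)) / ρ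
        + a ^ 2 * (n * σ₀ ^ 2 + σ₁ ^ 2 * (c + n * D))
      ≤ (1 - ρ / 2) * c + 2 * n * a ^ 2 / ρ * ((ς ^ 2 + σ₀ ^ 2) + 2 * σ₁ ^ 2 * D) := by
  have : 0 ≤ a ^ 2 / ρ := by positivity
  have hsq_le : a ^ 2 ≤ a ^ 2 / ρ := le_div_self (sq_nonneg a) hρ0 hρ1
  have hcontract : (σ₁ ^ 2 + 2 * L ^ 2) * (a ^ 2 / ρ) ≤ ρ / 2 := by
    rw [← mul_div_assoc, div_le_iff₀ hρ0]
    linarith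
  calc (1 - ρ) * c + a ^ 2 * (2 * (L ^ 2 * c + n * ς ^ 2)) / ρ
        + a ^ 2 * (n * σ₀ ^ 2 + σ₁ ^ 2 * (c + n * D))
      ≤ (1 - ρ) * c + a ^ 2 * (2 * (L ^ 2 * c + n * ς ^ 2)) / ρ
        + a ^ 2 / ρ * (n * σ₀ ^ 2 + σ₁ ^ 2 * (c + n * D)) := by gcongr
    _ = (1 - ρ) * c + (σ₁ ^ 2 + 2 * L ^ 2) * (a ^ 2 / ρ) * c
        + a ^ 2 / ρ * (n * (2 * ς ^ 2 + σ₀ ^ 2 + σ₁ ^ 2 * D)) := by ring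
    _ ≤ (1 - ρ) * c + ρ / 2 * c
        + a ^ 2 / ρ * (n * (2 * ς ^ 2 + 2 * σ₀ ^ 2 + 4 * σ₁ ^ 2 * D)) := by
      gcongr <;> linarith [sq_nonneg σ₀, sq_nonneg σ₁]
    _ = (1 - ρ / 2) * c + 2 * n * a ^ 2 / ρ * ((ς ^ 2 + σ₀ ^ 2) + 2 * σ₁ ^ 2 * D) := by ring

theorem mul_sq_le_sq_of_le_div_two_mul_sqrt {a k r : ℝ} (ha : 0 ≤ a) (hk : 0 < k)
    (h : a ≤ r / (2 * √k)) : k * a ^ 2 ≤ r ^ 2 := by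
  have hr : a * (2 * √k) ≤ r := (le_div_iff₀ (by positivity)).1 h
  calc k * a ^ 2 ≤ (a * (2 * √k)) ^ 2 := by
        rw [mul_pow, mul_pow, Real.sq_sqrt hk.le]
        linarith [mul_nonneg hk.le (sq_nonneg a)]
    _ ≤ r ^ 2 := by gcongr

section DSGD

open scoped Matrix.Module

variable {Ω E ι : Type*} {mΩ : MeasurableSpace Ω} {μ : Measure Ω} [NormedAddCommGroup E]
  [Fintype ι]

theorem memLp_dsgd [NormedSpace ℝ E] {p : ENNReal} {W : Matrix ι ι ℝ} {γ : ℕ → ℝ}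
    {θ g : ℕ → ι → Ω → E}
    (hθ : ∀ t i ω, θ (t + 1) i ω = ∑ j, W i j • θ t j ω - γ (t + 1) • g t i ω)
    (hθ0 : ∀ i, MemLp (θ 0 i) p μ) (hg : ∀ t i, MemLp (g t i) p μ) (t : ℕ) (i : ι) :
    MemLp (θ t i) p μ := by
  induction t generalizing i with
  | zero => exact hθ0 i
  | succ t ih =>
    rw [funext (hθ t i)]
    exact (memLp_finsetSum _ fun j _ => (ih j).const_smul (W i j)).sub ((hg t i).const_smul _)

variable [InnerProductSpace ℝ E] [CompleteSpace E] [DecidableEq ι] [IsFiniteMeasure μ]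
  {W : Matrix ι ι ℝ} {G : ι → E → E} {Gbar : E → E} {L : NNReal} {ρ ς σ₀ σ₁ : ℝ}

theorem condExp_consensusError_smul_sub_le {m : MeasurableSpace Ω} (hm : m ≤ mΩ)
    (hW : IsMixing W ρ) (hρ : 0 < ρ) (hG : ∀ i, LipschitzWith L (G i))
    (hς : ∀ i z, ‖Gbar z - G i z‖ ≤ ς) {x g : ι → Ω → E}
    (hx : ∀ i, StronglyMeasurable[m] (x i)) (hx2 : ∀ i, MemLp (x i) 2 μ)
    (hg2 : ∀ i, MemLp (g i) 2 μ) (hgx : ∀ i, μ[g i | m] =ᵐ[μ] fun ω => G i (x i ω)) (z : E)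
    (hσ : ∀ i, μ[fun ω => ‖g i ω - G i (x i ω)‖ ^ 2 | m]
      ≤ᵐ[μ] fun ω => σ₀ ^ 2 + σ₁ ^ 2 * ‖x i ω - z‖ ^ 2)
    {a : ℝ} (ha : 2 * (σ₁ ^ 2 + 2 * L ^ 2) * a ^ 2 ≤ ρ ^ 2) :
    μ[fun ω => consensusError fun i => (W • fun j => x j ω) i - a • g i ω | m] ≤ᵐ[μ] fun ω =>
      (1 - ρ / 2) * consensusError (fun i => x i ω)
        + 2 * Fintype.card ι * a ^ 2 / ρ
          * ((ς ^ 2 + σ₀ ^ 2) + 2 * σ₁ ^ 2 * ‖agentMean (fun i => x i ω) - z‖ ^ 2) := by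
  let y (i : ι) (ω : Ω) : E := (W • fun j => x j ω) i - a • G i (x i ω)
  let ξ (i : ι) (ω : Ω) : E := g i ω - G i (x i ω)
  have hGx (i : ι) : StronglyMeasurable[m] fun ω => G i (x i ω) :=
    (hG i).continuous.comp_stronglyMeasurable (hx i)
  have hGx2 (i : ι) : MemLp (fun ω => G i (x i ω)) 2 μ :=
    ((hg2 i).condExp one_le_two).ae_eq (hgx i)
  have hy (i : ι) : StronglyMeasurable[m] (y i) :=
    (Finset.stronglyMeasurable_fun_sum _ fun j _ => (hx j).const_smul (W i j)).sub
      ((hGx i).const_smul a)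
  have hy2 (i : ι) : MemLp (y i) 2 μ :=
    (memLp_finsetSum _ fun j _ => (hx2 j).const_smul (W i j)).sub ((hGx2 i).const_smul a)
  have hsplit (i : ι) (ω : Ω) : (W • fun j => x j ω) i - a • g i ω = y i ω - a • ξ i ω := by
    simp only [y, ξ, smul_sub, sub_sub, add_sub_cancel]
  have hξ2 (i : ι) : MemLp (ξ i) 2 μ := (hg2 i).sub (hGx2 i)
  have hξ0 (i : ι) : μ[ξ i | m] =ᵐ[μ] 0 :=
    condExp_sub_ae_eq_zero hm ((hg2 i).integrable one_le_two) (hGx i) (hgx i)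
  simp only [hsplit]
  filter_upwards [condExp_consensusError_sub_smul_le hm hy hy2 hξ2 hξ0 a,
    ae_all_iff.2 hσ] with ω hnoise hvar
  have hdrift := consensusError_smul_sub_le hW hρ hG hς a fun i => x i ω
  have hvariance := (Finset.sum_le_sum fun i (_ : i ∈ Finset.univ) => hvar i).trans_eq
    (sum_add_mul_norm_sub_sq (σ₀ ^ 2) (σ₁ ^ 2) (fun i => x i ω) z)
  refine hnoise.trans (le_trans ?_ (drift_add_noise_le hρ hW.le_one (consensusError_nonneg _)
    (sq_nonneg _) (Nat.cast_nonneg _) ha))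
  gcongr

theorem stmt6_general (hW : IsMixing W ρ) (hρ : 0 < ρ)
    (hG : ∀ i, LipschitzWith L (G i)) (hς : ∀ i z, ‖Gbar z - G i z‖ ≤ ς)
    {γ : ℕ → ℝ} {θ g : ℕ → ι → Ω → E} (hθ0 : ∀ i, MemLp (θ 0 i) 2 μ)
    (hθ : ∀ t i ω, θ (t + 1) i ω = ∑ j, W i j • θ t j ω - γ (t + 1) • g t i ω)
    {ℱ : ℕ → MeasurableSpace Ω} (hℱ : ∀ t, ℱ t ≤ mΩ)
    (hadapt : ∀ t i, StronglyMeasurable[ℱ t] (θ t i)) (hg2 : ∀ t i, MemLp (g t i) 2 μ) (z : E)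
    (hunb : ∀ t i, μ[g t i | ℱ t] =ᵐ[μ] fun ω => G i (θ t i ω))
    (hvar : ∀ t i, μ[fun ω => ‖g t i ω - G i (θ t i ω)‖ ^ 2 | ℱ t]
      ≤ᵐ[μ] fun ω => σ₀ ^ 2 + σ₁ ^ 2 * ‖θ t i ω - z‖ ^ 2)
    (hγ : ∀ t, 2 * (σ₁ ^ 2 + 2 * L ^ 2) * γ (t + 1) ^ 2 ≤ ρ ^ 2) (t : ℕ) :
    μ[fun ω => consensusError fun i => θ (t + 1) i ω | ℱ t] ≤ᵐ[μ] fun ω =>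
      (1 - ρ / 2) * consensusError (fun i => θ t i ω)
        + 2 * Fintype.card ι * γ (t + 1) ^ 2 / ρ
          * ((ς ^ 2 + σ₀ ^ 2) + 2 * σ₁ ^ 2 * ‖agentMean (fun i => θ t i ω) - z‖ ^ 2) := by
  simp only [hθ]
  exact condExp_consensusError_smul_sub_le (hℱ t) hW hρ hG hς (hadapt t) (memLp_dsgd hθ hθ0 hg2 t)
    (hg2 t) (hunb t) z (hvar t) (hγ t)

end DSGD

theorem stmt6
    {Ω : Type*} [mΩ : MeasurableSpace Ω] (P : Measure Ω) [IsProbabilityMeasure P]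
    (d n : ℕ) (hn : 0 < n)
    (fi : Fin n → EuclideanSpace ℝ (Fin d) → ℝ)
    (hfi : ∀ i, ContDiff ℝ 2 (fi i))
    (f : EuclideanSpace ℝ (Fin d) → ℝ)
    (hf : ∀ x, f x = (∑ i, fi i x) / n)
    (L ς : ℝ) (hL : 0 < L) (hς : 0 ≤ ς)
    (hlip : ∀ i x y, ‖gradient (fi i) x - gradient (fi i) y‖ ≤ L * ‖x - y‖)
    (hhet : ∀ i x, ‖gradient f x - gradient (fi i) x‖ ≤ ς)
    (W : Matrix (Fin n) (Fin n) ℝ)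
    (hWnn : ∀ i j, 0 ≤ W i j)
    (hWrow : ∀ i, ∑ j, W i j = 1) (hWcol : ∀ j, ∑ i, W i j = 1)
    (U : Matrix (Fin n) (Fin n) ℝ) (ρ : ℝ) (hρ0 : 0 < ρ) (hρ1 : ρ ≤ 1)
    (hUU : (1 : Matrix (Fin n) (Fin n) ℝ) - (n : ℝ)⁻¹ • Matrix.of (fun _ _ => (1 : ℝ)) = U * Uᵀ)
    (hUWU : ‖LinearMap.toContinuousLinearMap (Matrix.toEuclideanLin (Uᵀ * W * U))‖ ≤ 1 - ρ)
    (γ : ℕ → ℝ) (hγpos : ∀ t, 0 < γ t)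
    (θ : ℕ → Fin n → Ω → EuclideanSpace ℝ (Fin d))
    (g : ℕ → Fin n → Ω → EuclideanSpace ℝ (Fin d))
    (θ0 : Fin n → EuclideanSpace ℝ (Fin d)) (hθ0 : ∀ i ω, θ 0 i ω = θ0 i)
    (hrec : ∀ t i ω, θ (t + 1) i ω = ∑ j, W i j • θ t j ω - γ (t + 1) • g t i ω)
    (θb : ℕ → Ω → EuclideanSpace ℝ (Fin d))
    (hθb : ∀ t ω, θb t ω = (n : ℝ)⁻¹ • ∑ i, θ t i ω)
    (C : ℕ → Ω → ℝ)
    (hC : ∀ t ω, C t ω = ∑ i, ‖θ t i ω - θb t ω‖ ^ 2)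
    (ℱ : ℕ → MeasurableSpace Ω) (hℱ : ∀ t, ℱ t ≤ mΩ)
    (hadapt : ∀ t i, StronglyMeasurable[ℱ t] (θ t i))
    (hgmeas : ∀ t i, StronglyMeasurable (g t i))
    (hgL2 : ∀ t i, Integrable (fun ω => ‖g t i ω‖ ^ 2) P)
    (θstar : EuclideanSpace ℝ (Fin d)) (hmin : ∀ x, f θstar ≤ f x)
    (σ0 σ1 : ℝ) (hσ0 : 0 ≤ σ0) (hσ1 : 0 ≤ σ1)
    (hunb : ∀ t i, P[(fun ω => g t i ω) | ℱ t] =ᵐ[P] fun ω => gradient (fi i) (θ t i ω))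
    (hvar : ∀ t i, P[(fun ω => ‖g t i ω - gradient (fi i) (θ t i ω)‖ ^ 2) | ℱ t]
        ≤ᵐ[P] fun ω => σ0 ^ 2 + σ1 ^ 2 * ‖θ t i ω - θstar‖ ^ 2)
    (hstep : ∀ t : ℕ, 1 ≤ t → γ t ≤ ρ / (2 * Real.sqrt (2 * (σ1 ^ 2 + 2 * L ^ 2)))) :
    ∀ t : ℕ, P[(fun ω => C (t + 1) ω) | ℱ t] ≤ᵐ[P]
      fun ω => (1 - ρ / 2) * C t ω
        + 2 * (n : ℝ) * γ (t + 1) ^ 2 / ρ * ((ς ^ 2 + σ0 ^ 2) + 2 * σ1 ^ 2 * ‖θb t ω - θstar‖ ^ 2) := by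
  lift L to NNReal using hL.le
  have hW : IsMixing W ρ := ⟨hWrow, hWcol, U, by simpa only [Fintype.card_fin] using hUU, hUWU⟩
  have h := stmt6_general hW hρ0 (fun i => lipschitzWith_iff_norm_sub_le.2 (hlip i)) hhet
    (fun i => (memLp_const (θ0 i)).ae_eq (.of_forall fun ω => (hθ0 i ω).symm)) hrec hℱ hadapt
    (fun t i => (memLp_two_iff_integrable_sq_norm (hgmeas t i).aestronglyMeasurable).2 (hgL2 t i))
    θstar hunb hvar fun t => mul_sq_le_sq_of_le_div_two_mul_sqrt (hγpos _).le (by positivity)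
      (hstep (t + 1) t.succ_pos)
  simpa only [hC, hθb, consensusError, agentMean, Fintype.card_fin] using h
end

section
/- (Key high-order deviation bound.) Let f_1, …, f_n : ℝ^d → ℝ be twice continuously differentiable with f = (1/n)∑_{i=1}^n f_i, and suppose ‖∇²f(θ) − ∇²f_i(θ)‖ ≤ ς_H for all θ and i (A5), and each Hessian ∇²f_i is L_H-Lipschitz in operator norm (A6). Then for any points θ_1, …, θ_n ∈ ℝ^d, with θ̄ = (1/n)∑_{i=1}^n θ_i and S² := ∑_{i=1}^n ‖θ_i − θ̄‖², one has ‖(1/n)∑_{i=1}^n (∇f_i(θ_i) − ∇f_i(θ̄))‖² ≤ (L_H²/(2n²))·S⁴ + (2ς_H²/n)·S². -/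
open MeasureTheory Filter Matrix
open scoped BigOperators RealInnerProductSpace

/-!
Subtracting one linear map `H` from all the gradients `g i` changes the increments
`g i (θ i) - g i θbar` by `H (θ i - θbar)`, and these corrections cancel in the average because
`θbar` is the barycentre. With `H` the Hessian of `f` at `θbar`, the corrected field `g i - H` has
derivative at `z` of norm at most `ς + L * ‖z - θbar‖`. Integrating along the segment from `θbar` to
`θ i` bounds its increment by `ς * ‖θ i - θbar‖ + L / 2 * ‖θ i - θbar‖ ^ 2`. It remains to average,
square, and apply `(u + v) ^ 2 ≤ 2 * (u ^ 2 + v ^ 2)` and Jensen's inequality.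
-/

theorem sum_smul_sub_barycenter_eq_zero {ι R M : Type*} [Ring R] [AddCommGroup M] [Module R M]
    {t : Finset ι} {w : ι → R} {θ : ι → M} {x : M} (hw₁ : ∑ i ∈ t, w i = 1)
    (hx : x = ∑ i ∈ t, w i • θ i) : ∑ i ∈ t, w i • (θ i - x) = 0 := by
  simp only [smul_sub, Finset.sum_sub_distrib, ← Finset.sum_smul, hw₁, one_smul, ← hx, sub_self]

section NormedSpace

variable {ι E F : Type*} [NormedAddCommGroup E] [NormedSpace ℝ E] [NormedAddCommGroup F]
  [NormedSpace ℝ F] {s : Set E} {x : E} {a b : ℝ}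

theorem norm_image_sub_le_of_norm_hasFDerivWithinAt_le_add_mul {f : E → F} {f' : E → E →L[ℝ] F}
    {y : E} (hs : StarConvex ℝ x s) (hf : ∀ z ∈ s, HasFDerivWithinAt f (f' z) s z)
    (bound : ∀ z ∈ s, ‖f' z‖ ≤ a + b * ‖z - x‖) (hy : y ∈ s) :
    ‖f y - f x‖ ≤ a * ‖y - x‖ + b / 2 * ‖y - x‖ ^ 2 := by
  let γ : ℝ → E := AffineMap.lineMap x y
  have γ_mem : Set.MapsTo γ (Set.Icc 0 1) s := fun t ht =>
    hs.segment_subset hy (segment_eq_image_lineMap ℝ x y ▸ Set.mem_image_of_mem _ ht)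
  have norm_γ_sub {t : ℝ} (ht : 0 ≤ t) : ‖γ t - x‖ = t * ‖y - x‖ := by
    rw [← dist_eq_norm, dist_lineMap_left, dist_comm, dist_eq_norm, Real.norm_of_nonneg ht]
  have hasDeriv : ∀ t ∈ Set.Icc (0 : ℝ) 1,
      HasDerivWithinAt (fun t => f (γ t) - f x) (f' (γ t) (y - x)) (Set.Icc 0 1) t := fun t ht =>
    ((hf _ (γ_mem ht)).comp_hasDerivWithinAt t AffineMap.hasDerivWithinAt_lineMap γ_mem).sub_const _
  have hasDeriv_majorant (t : ℝ) :
      HasDerivAt (fun t => a * ‖y - x‖ * t + b / 2 * ‖y - x‖ ^ 2 * t ^ 2)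
        ((a + b * (t * ‖y - x‖)) * ‖y - x‖) t := by
    refine (((hasDerivAt_id t).const_mul (a * ‖y - x‖)).add
      ((hasDerivAt_pow 2 t).const_mul (b / 2 * ‖y - x‖ ^ 2))).congr_deriv ?_
    push_cast
    ring
  have deriv_le : ∀ t ∈ Set.Ico (0 : ℝ) 1,
      ‖f' (γ t) (y - x)‖ ≤ (a + b * (t * ‖y - x‖)) * ‖y - x‖ := fun t ht =>
    (f' (γ t)).le_of_opNorm_le
      (norm_γ_sub ht.1 ▸ bound _ (γ_mem (Set.Ico_subset_Icc_self ht))) _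
  have := image_norm_le_of_norm_deriv_right_le_deriv_boundary
    (fun t ht => (hasDeriv t ht).continuousWithinAt)
    (fun t ht => (hasDeriv t (Set.Ico_subset_Icc_self ht)).mono_of_mem_nhdsWithin
      (Icc_mem_nhdsGE_of_mem ht))
    (by simp [γ]) hasDeriv_majorant deriv_le (Set.right_mem_Icc.2 zero_le_one)
  simpa [γ] using this

variable {t : Finset ι} {w : ι → ℝ} {θ : ι → E} {g : ι → E → F} {g' : ι → E → E →L[ℝ] F}
  {H : E →L[ℝ] F}

theorem norm_sum_smul_image_sub_barycenter_le (hw : ∀ i ∈ t, 0 ≤ w i) (hw₁ : ∑ i ∈ t, w i = 1)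
    (hx : x = ∑ i ∈ t, w i • θ i) (hs : StarConvex ℝ x s) (hθ : ∀ i ∈ t, θ i ∈ s)
    (hg : ∀ i ∈ t, ∀ z ∈ s, HasFDerivWithinAt (g i) (g' i z) s z)
    (bound : ∀ i ∈ t, ∀ z ∈ s, ‖g' i z - H‖ ≤ a + b * ‖z - x‖) :
    ‖∑ i ∈ t, w i • (g i (θ i) - g i x)‖ ≤
      a * ∑ i ∈ t, w i * ‖θ i - x‖ + b / 2 * ∑ i ∈ t, w i * ‖θ i - x‖ ^ 2 := by
  have increment_le : ∀ i ∈ t, ‖g i (θ i) - g i x - H (θ i - x)‖ ≤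
      a * ‖θ i - x‖ + b / 2 * ‖θ i - x‖ ^ 2 := fun i hi => by
    rw [map_sub, sub_sub_sub_comm]
    exact norm_image_sub_le_of_norm_hasFDerivWithinAt_le_add_mul hs
      (fun z hz => (hg i hi z hz).sub H.hasFDerivWithinAt) (bound i hi) (hθ i hi)
  have sum_correction : ∑ i ∈ t, w i • H (θ i - x) = 0 := by
    simp only [← map_smul, ← map_sum, sum_smul_sub_barycenter_eq_zero hw₁ hx, map_zero]
  calc ‖∑ i ∈ t, w i • (g i (θ i) - g i x)‖
      = ‖∑ i ∈ t, w i • (g i (θ i) - g i x - H (θ i - x))‖ := by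
        simp only [smul_sub _ (_ - _) (H _)]
        rw [Finset.sum_sub_distrib, sum_correction, sub_zero]
    _ ≤ ∑ i ∈ t, w i * (a * ‖θ i - x‖ + b / 2 * ‖θ i - x‖ ^ 2) :=
        norm_sum_le_of_le _ fun i hi => by
          rw [norm_smul, Real.norm_of_nonneg (hw i hi)]
          exact mul_le_mul_of_nonneg_left (increment_le i hi) (hw i hi)
    _ = a * ∑ i ∈ t, w i * ‖θ i - x‖ + b / 2 * ∑ i ∈ t, w i * ‖θ i - x‖ ^ 2 := by
        simp only [mul_add, Finset.sum_add_distrib, Finset.mul_sum, mul_left_comm]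

theorem sq_norm_sum_smul_image_sub_barycenter_le (hw : ∀ i ∈ t, 0 ≤ w i)
    (hw₁ : ∑ i ∈ t, w i = 1) (hx : x = ∑ i ∈ t, w i • θ i) (hs : StarConvex ℝ x s)
    (hθ : ∀ i ∈ t, θ i ∈ s) (hg : ∀ i ∈ t, ∀ z ∈ s, HasFDerivWithinAt (g i) (g' i z) s z)
    (bound : ∀ i ∈ t, ∀ z ∈ s, ‖g' i z - H‖ ≤ a + b * ‖z - x‖) :
    ‖∑ i ∈ t, w i • (g i (θ i) - g i x)‖ ^ 2 ≤
      b ^ 2 / 2 * (∑ i ∈ t, w i * ‖θ i - x‖ ^ 2) ^ 2 +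
        2 * a ^ 2 * ∑ i ∈ t, w i * ‖θ i - x‖ ^ 2 := by
  set T := ∑ i ∈ t, w i * ‖θ i - x‖
  set V := ∑ i ∈ t, w i * ‖θ i - x‖ ^ 2
  have jensen : T ^ 2 ≤ V :=
    Real.pow_arith_mean_le_arith_mean_pow t w _ hw hw₁ (fun _ _ => norm_nonneg _) 2
  calc ‖∑ i ∈ t, w i • (g i (θ i) - g i x)‖ ^ 2
      ≤ (a * T + b / 2 * V) ^ 2 := by
        gcongr
        exact norm_sum_smul_image_sub_barycenter_le hw hw₁ hx hs hθ hg bound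
    _ ≤ 2 * ((a * T) ^ 2 + (b / 2 * V) ^ 2) := add_sq_le
    _ = b ^ 2 / 2 * V ^ 2 + 2 * a ^ 2 * T ^ 2 := by ring
    _ ≤ b ^ 2 / 2 * V ^ 2 + 2 * a ^ 2 * V := by gcongr

theorem stmt15_general [Fintype ι] [Nonempty ι]
    (hg : ∀ i, ∀ z ∈ s, HasFDerivWithinAt (g i) (g' i z) s z) {ς L : ℝ}
    (hθ : ∀ i, θ i ∈ s) (hx : x = (Fintype.card ι : ℝ)⁻¹ • ∑ i, θ i) (hs : StarConvex ℝ x s)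
    (hsim : ∀ i, ‖H - g' i x‖ ≤ ς) (hlip : ∀ i, ∀ z ∈ s, ‖g' i z - g' i x‖ ≤ L * ‖z - x‖) :
    ‖(Fintype.card ι : ℝ)⁻¹ • ∑ i, (g i (θ i) - g i x)‖ ^ 2 ≤
      L ^ 2 / (2 * (Fintype.card ι : ℝ) ^ 2) * (∑ i, ‖θ i - x‖ ^ 2) ^ 2 +
        2 * ς ^ 2 / (Fintype.card ι : ℝ) * ∑ i, ‖θ i - x‖ ^ 2 := by
  have bound : ∀ i, ∀ z ∈ s, ‖g' i z - H‖ ≤ ς + L * ‖z - x‖ := fun i z hz => by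
    rw [add_comm]
    exact norm_sub_le_norm_sub_add_norm_sub _ (g' i x) _ |>.trans
      (add_le_add (hlip i z hz) (norm_sub_rev H _ ▸ hsim i))
  have := sq_norm_sum_smul_image_sub_barycenter_le (t := Finset.univ)
    (w := fun _ => (Fintype.card ι : ℝ)⁻¹) (fun _ _ => by positivity) (by simp)
    (by rw [hx, Finset.smul_sum]) hs (fun i _ => hθ i) (fun i _ => hg i) (fun i _ => bound i)
  simp only [← Finset.smul_sum, ← Finset.mul_sum] at this
  exact this.trans_eq (by ring)

end NormedSpace

theorem contDiff_gradient {E : Type*} [NormedAddCommGroup E] [InnerProductSpace ℝ E]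
    [CompleteSpace E] {f : E → ℝ} {m k : WithTop ℕ∞} (hf : ContDiff ℝ k f) (hmk : m + 1 ≤ k) :
    ContDiff ℝ m (gradient f) :=
  (InnerProductSpace.toDual ℝ E).symm.contDiff.comp (hf.fderiv_right hmk)

theorem stmt15
    (d n : ℕ) (hn : 0 < n)
    (fi : Fin n → EuclideanSpace ℝ (Fin d) → ℝ)
    (hfi : ∀ i, ContDiff ℝ 2 (fi i))
    (f : EuclideanSpace ℝ (Fin d) → ℝ)
    (hf : ∀ x, f x = (∑ i, fi i x) / n)
    (ςH : ℝ) (hςH : 0 ≤ ςH)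
    (hhessSim : ∀ i x, ‖fderiv ℝ (gradient f) x - fderiv ℝ (gradient (fi i)) x‖ ≤ ςH)
    (LH : ℝ) (hLH : 0 ≤ LH)
    (hhessLip : ∀ i x y,
      ‖fderiv ℝ (gradient (fi i)) x - fderiv ℝ (gradient (fi i)) y‖ ≤ LH * ‖x - y‖)
    (θi : Fin n → EuclideanSpace ℝ (Fin d))
    (θbar : EuclideanSpace ℝ (Fin d)) (hθbar : θbar = (n : ℝ)⁻¹ • ∑ i, θi i)
    (S2 : ℝ) (hS2 : S2 = ∑ i, ‖θi i - θbar‖ ^ 2) :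
    ‖(n : ℝ)⁻¹ • ∑ i, (gradient (fi i) (θi i) - gradient (fi i) θbar)‖ ^ 2 ≤
      LH ^ 2 / (2 * (n : ℝ) ^ 2) * S2 ^ 2 + 2 * ςH ^ 2 / (n : ℝ) * S2 := by
  subst hS2
  have : NeZero n := ⟨hn.ne'⟩
  have hgrad (i) := (contDiff_gradient (hfi i) one_add_one_eq_two.le).differentiable_one
  simpa only [Fintype.card_fin] using stmt15_general
    (fun i x _ => (hgrad i x).hasFDerivAt.hasFDerivWithinAt) (fun _ => Set.mem_univ _)
    (by rwa [Fintype.card_fin]) (starConvex_univ _) (hhessSim · θbar)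
    (fun i x _ => hhessLip i x θbar)
end

section
/- (Second-moment bound on the projected stochastic gradient matrix, eq. (eq4).) Under A1 and A4 with general constants σ₀, σ₁, at each DSGD iteration t let g_i := ∇ℓ_i(θ_i^t; Z_i^{t+1}) and ḡ := (1/n)∑_{j=1}^n g_j. Then E_t[∑_{i=1}^n ‖g_i − ḡ‖²] ≤ 2n(σ₀² + ς²) + 4nσ₁²‖θ̄^t − θ*‖² + 4(σ₁² + 2L²)‖Θ_o^t‖_F². -/
open MeasureTheory Filter Matrix
open scoped BigOperators RealInnerProductSpace

/-
The mean of a family minimizes its sum of squared distances to a point, and the parallel-axis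
identity gives the excess at any other point. Replacing `ḡ` by the mean of the conditional
expectations of the `g_i` therefore only increases the left-hand side, after which each summand
splits, conditionally, into orthogonal noise and bias parts. The noise is bounded by
`σ₀² + σ₁² ‖θ_i - θ*‖²`, and the parallel-axis identity turns `∑ ‖θ_i - θ*‖²` into
`‖Θ_o‖_F² + n ‖θ̄ - θ*‖²`. The bias parts add up to the squared deviation of the true gradients from
their mean, which only increases when that mean is replaced by `∇f(θ̄)`; there the Lipschitz and
heterogeneity bounds apply.
-/

section Mean

variable {ι E : Type*} [Fintype ι] [NormedAddCommGroup E] [NormedSpace ℝ E]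

/-- The uniform average of a finite family of vectors: `θ̄` and `ḡ` in the theorem. -/
noncomputable def mean (x : ι → E) : E :=
  (Fintype.card ι : ℝ)⁻¹ • ∑ i, x i

/-- The sum of the squared distances of a finite family to its mean; for the family of local
iterates this is the consensus error `‖Θ_o‖_F²`. It is not divided by the size of the family. -/
noncomputable def scatter (x : ι → E) : ℝ :=
  ∑ i, ‖x i - mean x‖ ^ 2

lemma sum_sub_mean [Nonempty ι] (x : ι → E) : ∑ i, (x i - mean x) = 0 := by
  have hcard : (Fintype.card ι : ℝ) ≠ 0 := Nat.cast_ne_zero.2 Fintype.card_ne_zero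
  rw [Finset.sum_sub_distrib, Finset.sum_const, Finset.card_univ, ← Nat.cast_smul_eq_nsmul ℝ, mean,
    smul_inv_smul₀ hcard, sub_self]

lemma memLp_mean {Ω : Type*} [MeasurableSpace Ω] {μ : Measure Ω} {X : ι → Ω → E}
    {p : ENNReal} (hX : ∀ i, MemLp (X i) p μ) :
    MemLp (fun ω => mean (fun i => X i ω)) p μ :=
  (memLp_finsetSum _ fun i _ => hX i).const_smul _

end Mean

section Scatter

variable {ι E : Type*} [Fintype ι] [Nonempty ι] [NormedAddCommGroup E] [InnerProductSpace ℝ E]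

lemma sum_norm_sub_sq_eq_scatter_add (x : ι → E) (c : E) :
    ∑ i, ‖x i - c‖ ^ 2 = scatter x + Fintype.card ι * ‖mean x - c‖ ^ 2 := by
  have expand (i : ι) : ‖x i - c‖ ^ 2 =
      ‖x i - mean x‖ ^ 2 + 2 * ⟪x i - mean x, mean x - c⟫ + ‖mean x - c‖ ^ 2 := by
    rw [← norm_add_sq_real, sub_add_sub_cancel]
  have cross : ∑ i, ⟪x i - mean x, mean x - c⟫ = 0 := by
    rw [← sum_inner, sum_sub_mean, inner_zero_left]
  simp only [expand, Finset.sum_add_distrib, ← Finset.mul_sum, cross, mul_zero, add_zero,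
    Finset.sum_const, Finset.card_univ, nsmul_eq_mul, scatter]

lemma scatter_le_sum_norm_sub_sq (x : ι → E) (c : E) : scatter x ≤ ∑ i, ‖x i - c‖ ^ 2 := by
  rw [sum_norm_sub_sq_eq_scatter_add]
  exact le_add_of_nonneg_right (by positivity)

lemma scatter_comp_le_of_lipschitzWith {E' : Type*} [NormedAddCommGroup E'] [NormedSpace ℝ E']
    {F : ι → E' → E} {K : NNReal} (hF : ∀ i, LipschitzWith K (F i)) (x : ι → E') {c : E} {ς : ℝ}
    (hc : ∀ i, ‖c - F i (mean x)‖ ≤ ς) :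
    scatter (fun i => F i (x i)) ≤ 2 * K ^ 2 * scatter x + 2 * Fintype.card ι * ς ^ 2 := by
  have dist_le (i : ι) : ‖F i (x i) - c‖ ≤ K * ‖x i - mean x‖ + ς :=
    (norm_sub_le_norm_sub_add_norm_sub _ (F i (mean x)) _).trans <|
      add_le_add ((hF i).norm_sub_le _ _) (norm_sub_rev c _ ▸ hc i)
  calc scatter (fun i => F i (x i))
      ≤ ∑ i, ‖F i (x i) - c‖ ^ 2 := scatter_le_sum_norm_sub_sq _ c
    _ ≤ ∑ i, 2 * ((K * ‖x i - mean x‖) ^ 2 + ς ^ 2) := by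
      gcongr with i
      exact (pow_le_pow_left₀ (norm_nonneg _) (dist_le i) 2).trans add_sq_le
    _ = 2 * K ^ 2 * scatter x + 2 * Fintype.card ι * ς ^ 2 := by
      simp only [mul_pow, mul_add, Finset.sum_add_distrib, ← Finset.mul_sum, Finset.sum_const,
        Finset.card_univ, nsmul_eq_mul, scatter]
      ring

end Scatter

section CondExp

variable {Ω E : Type*} [NormedAddCommGroup E] [InnerProductSpace ℝ E]
  {m m₀ : MeasurableSpace Ω} {μ : Measure Ω} {X Y : Ω → E}

lemma integrable_inner_of_memLp_two_s17 (hX : MemLp X 2 μ) (hY : MemLp Y 2 μ) :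
    Integrable (fun ω => ⟪X ω, Y ω⟫) μ :=
  memLp_one_iff_integrable.1 ((innerSL ℝ).memLp_of_bilin 1 hX hY)

variable [CompleteSpace E]

lemma condExp_sub_condExp (hm : m ≤ m₀) [SigmaFinite (μ.trim hm)] (hX : Integrable X μ) :
    μ[X - μ[X | m] | m] =ᵐ[μ] 0 := by
  filter_upwards [condExp_sub hX integrable_condExp m, condExp_condExp_of_le (f := X) le_rfl hm]
    with ω hsub hidem
  rw [hsub, Pi.sub_apply, hidem, sub_self, Pi.zero_apply]

lemma condExp_inner_sub_condExp (hm : m ≤ m₀) [SigmaFinite (μ.trim hm)]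
    (hY : AEStronglyMeasurable[m] Y μ) (hX : Integrable X μ)
    (hYX : Integrable (fun ω => ⟪Y ω, (X - μ[X | m]) ω⟫) μ) :
    μ[fun ω => ⟪Y ω, (X - μ[X | m]) ω⟫ | m] =ᵐ[μ] 0 := by
  filter_upwards [condExp_bilin_of_aestronglyMeasurable_left (innerSL ℝ) hY hYX
    (hX.sub integrable_condExp), condExp_sub_condExp hm hX] with ω hpull hzero
  exact hpull.trans (by rw [hzero]; exact inner_zero_right _)

variable [IsFiniteMeasure μ]

lemma condExp_norm_sub_sq_eq (hm : m ≤ m₀) (hX : MemLp X 2 μ) (hY : MemLp Y 2 μ)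
    (hYm : AEStronglyMeasurable[m] Y μ) :
    μ[fun ω => ‖X ω - Y ω‖ ^ 2 | m] =ᵐ[μ]
      fun ω => μ[fun ω => ‖X ω - μ[X | m] ω‖ ^ 2 | m] ω + ‖μ[X | m] ω - Y ω‖ ^ 2 := by
  have hM : MemLp (μ[X | m]) 2 μ := hX.condExp one_le_two
  have hXM : MemLp (X - μ[X | m]) 2 μ := hX.sub hM
  have hMY : MemLp (μ[X | m] - Y) 2 μ := hM.sub hY
  have hMY_meas : AEStronglyMeasurable[m] (μ[X | m] - Y) μ :=
    stronglyMeasurable_condExp.aestronglyMeasurable.sub hYm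
  let noise : Ω → ℝ := fun ω => ‖(X - μ[X | m]) ω‖ ^ 2
  let cross : Ω → ℝ := fun ω => ⟪(μ[X | m] - Y) ω, (X - μ[X | m]) ω⟫
  let bias : Ω → ℝ := fun ω => ‖(μ[X | m] - Y) ω‖ ^ 2
  have noise_int : Integrable noise μ := hXM.integrable_norm_pow two_ne_zero
  have cross_int : Integrable cross μ := integrable_inner_of_memLp_two_s17 hMY hXM
  have bias_meas : AEStronglyMeasurable[m] bias μ :=
    (continuous_norm.pow 2).comp_aestronglyMeasurable hMY_meas
  have bias_int : Integrable bias μ := hMY.integrable_norm_pow two_ne_zero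
  have expand : (fun ω => ‖X ω - Y ω‖ ^ 2) = noise + (2 : ℝ) • cross + bias := by
    funext ω
    have hsq := norm_add_sq_real ((μ[X | m] - Y) ω) ((X - μ[X | m]) ω)
    simp only [Pi.sub_apply, sub_add_sub_cancel'] at hsq
    simp only [hsq, noise, cross, bias, Pi.add_apply, Pi.smul_apply, Pi.sub_apply, smul_eq_mul]
    ring
  rw [expand]
  filter_upwards [condExp_add (noise_int.add (cross_int.smul (2 : ℝ))) bias_int m,
    condExp_add noise_int (cross_int.smul (2 : ℝ)) m, condExp_smul (2 : ℝ) cross m,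
    condExp_inner_sub_condExp hm hMY_meas (hX.integrable one_le_two) cross_int,
    condExp_of_aestronglyMeasurable' hm bias_meas bias_int]
    with ω hadd₁ hadd₂ hsmul hcross hbias_self
  rw [hadd₁, Pi.add_apply, hadd₂, Pi.add_apply, hsmul, Pi.smul_apply, hcross, Pi.zero_apply,
    smul_zero, add_zero, hbias_self]
  rfl

lemma condExp_scatter_le {ι : Type*} [Fintype ι] [Nonempty ι] {X : ι → Ω → E} (hm : m ≤ m₀)
    (hX : ∀ i, MemLp (X i) 2 μ) :
    μ[fun ω => scatter (fun i => X i ω) | m] ≤ᵐ[μ]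
      fun ω => ∑ i, μ[fun ω => ‖X i ω - μ[X i | m] ω‖ ^ 2 | m] ω
        + scatter (fun i => μ[X i | m] ω) := by
  let c : Ω → E := fun ω => mean (fun i => μ[X i | m] ω)
  have hc : MemLp c 2 μ := memLp_mean fun i => (hX i).condExp one_le_two
  have hcm : StronglyMeasurable[m] c :=
    (Finset.stronglyMeasurable_fun_sum _ fun _ _ => stronglyMeasurable_condExp).fun_const_smul _
  have hint {Z : Ω → E} (hZ : MemLp Z 2 μ) (i : ι) : Integrable (fun ω => ‖X i ω - Z ω‖ ^ 2) μ :=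
    ((hX i).sub hZ).integrable_norm_pow two_ne_zero
  have hmono : μ[fun ω => scatter (fun i => X i ω) | m] ≤ᵐ[μ]
      μ[∑ i, fun ω => ‖X i ω - c ω‖ ^ 2 | m] := by
    refine condExp_mono (integrable_finsetSum _ fun i _ => hint (memLp_mean hX) i)
      (integrable_finsetSum' _ fun i _ => hint hc i) (ae_of_all _ fun ω => ?_)
    simpa only [Finset.sum_apply] using scatter_le_sum_norm_sub_sq _ (c ω)
  filter_upwards [hmono, condExp_finsetSum (s := Finset.univ) (fun i _ => hint hc i) m,
    ae_all_iff.2 fun i => condExp_norm_sub_sq_eq hm (hX i) hc hcm.aestronglyMeasurable]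
    with ω hle hsum hsplit
  refine hle.trans_eq ?_
  simp only [hsum, Finset.sum_apply, hsplit, Finset.sum_add_distrib, c, scatter]

end CondExp

theorem stmt17_general {Ω E E' ι : Type*} [Fintype ι] [Nonempty ι]
    [NormedAddCommGroup E] [InnerProductSpace ℝ E] [CompleteSpace E]
    [NormedAddCommGroup E'] [InnerProductSpace ℝ E']
    {m m₀ : MeasurableSpace Ω} (hm : m ≤ m₀) {μ : Measure Ω} [IsFiniteMeasure μ]
    {F : ι → E' → E} {G : E' → E} {K : NNReal} {ς : ℝ}
    (hF : ∀ i, LipschitzWith K (F i)) (hG : ∀ i x, ‖G x - F i x‖ ≤ ς)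
    (θ : ι → Ω → E') {g : ι → Ω → E} (hg : ∀ i, MemLp (g i) 2 μ) (θstar : E') {σ₀ σ₁ : ℝ}
    (hunb : ∀ i, μ[g i | m] =ᵐ[μ] fun ω => F i (θ i ω))
    (hvar : ∀ i, μ[fun ω => ‖g i ω - F i (θ i ω)‖ ^ 2 | m] ≤ᵐ[μ]
      fun ω => σ₀ ^ 2 + σ₁ ^ 2 * ‖θ i ω - θstar‖ ^ 2) :
    μ[fun ω => scatter (fun i => g i ω) | m] ≤ᵐ[μ] fun ω =>
      Fintype.card ι * (σ₀ ^ 2 + 2 * ς ^ 2)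
        + Fintype.card ι * σ₁ ^ 2 * ‖mean (fun i => θ i ω) - θstar‖ ^ 2
        + (σ₁ ^ 2 + 2 * K ^ 2) * scatter (fun i => θ i ω) := by
  have hnoise (i : ι) : μ[fun ω => ‖g i ω - μ[g i | m] ω‖ ^ 2 | m] =ᵐ[μ]
      μ[fun ω => ‖g i ω - F i (θ i ω)‖ ^ 2 | m] :=
    condExp_congr_ae ((hunb i).mono fun ω h => by simp only [h])
  filter_upwards [condExp_scatter_le hm hg, ae_all_iff.2 hunb, ae_all_iff.2 hnoise,
    ae_all_iff.2 hvar] with ω hle hmean hnoise hvar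
  simp only [hmean, hnoise] at hle
  calc μ[fun ω => scatter (fun i => g i ω) | m] ω
      ≤ ∑ i, μ[fun ω => ‖g i ω - F i (θ i ω)‖ ^ 2 | m] ω + scatter (fun i => F i (θ i ω)) := hle
    _ ≤ ∑ i, (σ₀ ^ 2 + σ₁ ^ 2 * ‖θ i ω - θstar‖ ^ 2)
        + (2 * K ^ 2 * scatter (fun i => θ i ω) + 2 * Fintype.card ι * ς ^ 2) := by
      gcongr with i
      · exact hvar i
      · exact scatter_comp_le_of_lipschitzWith hF _ fun i => hG i _
    _ = _ := by
      rw [Finset.sum_add_distrib, ← Finset.mul_sum, sum_norm_sub_sq_eq_scatter_add,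
        Finset.sum_const, Finset.card_univ, nsmul_eq_mul]
      ring

theorem stmt17
    {Ω : Type*} [mΩ : MeasurableSpace Ω] (P : Measure Ω) [IsProbabilityMeasure P]
    (d n : ℕ) (hn : 0 < n)
    (fi : Fin n → EuclideanSpace ℝ (Fin d) → ℝ)
    (hfi : ∀ i, ContDiff ℝ 2 (fi i))
    (f : EuclideanSpace ℝ (Fin d) → ℝ)
    (hf : ∀ x, f x = (∑ i, fi i x) / n)
    (L ς : ℝ) (hL : 0 < L) (hς : 0 ≤ ς)
    (hlip : ∀ i x y, ‖gradient (fi i) x - gradient (fi i) y‖ ≤ L * ‖x - y‖)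
    (hhet : ∀ i x, ‖gradient f x - gradient (fi i) x‖ ≤ ς)
    (W : Matrix (Fin n) (Fin n) ℝ)
    (hWnn : ∀ i j, 0 ≤ W i j)
    (hWrow : ∀ i, ∑ j, W i j = 1) (hWcol : ∀ j, ∑ i, W i j = 1)
    (γ : ℕ → ℝ) (hγpos : ∀ t, 0 < γ t)
    (θ : ℕ → Fin n → Ω → EuclideanSpace ℝ (Fin d))
    (g : ℕ → Fin n → Ω → EuclideanSpace ℝ (Fin d))
    (θ0 : Fin n → EuclideanSpace ℝ (Fin d)) (hθ0 : ∀ i ω, θ 0 i ω = θ0 i)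
    (hrec : ∀ t i ω, θ (t + 1) i ω = ∑ j, W i j • θ t j ω - γ (t + 1) • g t i ω)
    (θb : ℕ → Ω → EuclideanSpace ℝ (Fin d))
    (hθb : ∀ t ω, θb t ω = (n : ℝ)⁻¹ • ∑ i, θ t i ω)
    (C : ℕ → Ω → ℝ)
    (hC : ∀ t ω, C t ω = ∑ i, ‖θ t i ω - θb t ω‖ ^ 2)
    (ℱ : ℕ → MeasurableSpace Ω) (hℱ : ∀ t, ℱ t ≤ mΩ)
    (hadapt : ∀ t i, StronglyMeasurable[ℱ t] (θ t i))
    (hgmeas : ∀ t i, StronglyMeasurable (g t i))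
    (hgL2 : ∀ t i, Integrable (fun ω => ‖g t i ω‖ ^ 2) P)
    (θstar : EuclideanSpace ℝ (Fin d)) (hmin : ∀ x, f θstar ≤ f x)
    (σ0 σ1 : ℝ) (hσ0 : 0 ≤ σ0) (hσ1 : 0 ≤ σ1)
    (hunb : ∀ t i, P[(fun ω => g t i ω) | ℱ t] =ᵐ[P] fun ω => gradient (fi i) (θ t i ω))
    (hvar : ∀ t i, P[(fun ω => ‖g t i ω - gradient (fi i) (θ t i ω)‖ ^ 2) | ℱ t]
        ≤ᵐ[P] fun ω => σ0 ^ 2 + σ1 ^ 2 * ‖θ t i ω - θstar‖ ^ 2)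
    : ∀ t : ℕ, P[(fun ω => ∑ i, ‖g t i ω - (n : ℝ)⁻¹ • ∑ j, g t j ω‖ ^ 2) | ℱ t] ≤ᵐ[P]
      fun ω => 2 * (n : ℝ) * (σ0 ^ 2 + ς ^ 2) + 4 * (n : ℝ) * σ1 ^ 2 * ‖θb t ω - θstar‖ ^ 2
        + 4 * (σ1 ^ 2 + 2 * L ^ 2) * C t ω := by
  intro t
  have : Nonempty (Fin n) := ⟨⟨0, hn⟩⟩
  lift L to NNReal using hL.le
  have hgrad (i : Fin n) : LipschitzWith L (gradient (fi i)) :=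
    .of_dist_le_mul fun x y => by simpa only [dist_eq_norm] using hlip i x y
  have hg (i : Fin n) : MemLp (g t i) 2 P :=
    (memLp_two_iff_integrable_sq_norm (hgmeas t i).aestronglyMeasurable).2 (hgL2 t i)
  have hbound := stmt17_general (hℱ t) hgrad hhet (θ t) hg θstar (hunb t) (hvar t)
  simp only [scatter, mean, Fintype.card_fin, ← hθb, ← hC] at hbound
  filter_upwards [hbound] with ω hω
  have hC_nonneg : 0 ≤ C t ω := by rw [hC]; positivity
  have hslack : 0 ≤ n * σ0 ^ 2 + 3 * (n * σ1 ^ 2 * ‖θb t ω - θstar‖ ^ 2)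
      + 3 * ((σ1 ^ 2 + 2 * L ^ 2) * C t ω) := by positivity
  linarith
end
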